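/- arXiv:math/0108043 — 3 statements merged into one kernel-verified Lean document; each statement's English description precedes it below -/
import Mathlib

section
/- Let F(X) = Σ_{n≥0} |{π ∈ S_n : π avoids the patterns 132, 2341 and 3241}|·Xⁿ ∈ ℚ⟦X⟧. Then (1 − 2X − X²)·F(X) = 1 − X − X². -/
/-- A pattern is a permutation of `{1,…,k}` for some `k`. -/
def Pattern : Type := Σ k : ℕ, Equiv.Perm (Fin k)

/-- `IsOccurrence τ π f` says that the strictly increasing tuple of indices `f` is an
occurrence of the pattern `τ` in the permutation `π`, i.e. `π ∘ f` is order-isomorphic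
to `τ`. -/
def IsOccurrence {k n : ℕ} (τ : Equiv.Perm (Fin k)) (π : Equiv.Perm (Fin n))
    (f : Fin k → Fin n) : Prop :=
  StrictMono f ∧ ∀ a b : Fin k, τ a < τ b ↔ π (f a) < π (f b)

/-- `π` contains the pattern `τ` (at least once). -/
def Contains {k n : ℕ} (τ : Equiv.Perm (Fin k)) (π : Equiv.Perm (Fin n)) : Prop :=
  ∃ f : Fin k → Fin n, IsOccurrence τ π f

/-- `π` contains the pattern `τ` exactly once. -/
def ContainsOnce {k n : ℕ} (τ : Equiv.Perm (Fin k)) (π : Equiv.Perm (Fin n)) : Prop :=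
  ∃! f : Fin k → Fin n, IsOccurrence τ π f

/-- `π` avoids every pattern in the set `T`. -/
def AvoidsSet {n : ℕ} (T : Set Pattern) (π : Equiv.Perm (Fin n)) : Prop :=
  ∀ p ∈ T, ¬ Contains p.2 π

/-- `f_T(n)`: the number of permutations of `{1,…,n}` avoiding every pattern in `T`. -/
noncomputable def avoidCount (T : Set Pattern) (n : ℕ) : ℕ :=
  Nat.card {π : Equiv.Perm (Fin n) // AvoidsSet T π}

/-- The pattern `132 ∈ S₃` (zero-indexed: `0 ↦ 0, 1 ↦ 2, 2 ↦ 1`). -/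
noncomputable def p132 : Equiv.Perm (Fin 3) := Equiv.ofBijective ![0, 2, 1] (by decide)

/-- The pattern `2341 ∈ S₄` (zero-indexed: `0↦1, 1↦2, 2↦3, 3↦0`). -/
noncomputable def p2341 : Equiv.Perm (Fin 4) := Equiv.ofBijective ![1, 2, 3, 0] (by decide)

/-- The pattern `3241 ∈ S₄` (zero-indexed: `0↦2, 1↦1, 2↦3, 3↦0`). -/
noncomputable def p3241 : Equiv.Perm (Fin 4) := Equiv.ofBijective ![2, 1, 3, 0] (by decide)

/-!
Consider the position of the maximum in an avoider of length at least three. Avoiding `132` forces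
every entry before the maximum to exceed every entry after it. If the maximum is not last, then two
entries before it would, together with it and any later entry, form a `2341` or a `3241`; so it is
in first, second or last position, and if it is second but not last then the entry in front of it is
the second largest. Conversely, placing a maximum first or last, or the two largest entries in
increasing order at the front, never creates one of the three patterns, so the number `a n` of
avoiders of length `n` satisfies `a (n + 3) = 2 * a (n + 2) + a (n + 1)`.
-/

open PowerSeries in
theorem mul_mk_eq_of_linear_recurrence {R : Type*} [CommRing R] {a : ℕ → R} {c d : R}
    (h : ∀ n, a (n + 3) = c * a (n + 2) + d * a (n + 1)) :
    (1 - C c * X - C d * X ^ 2) * mk a =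
      C (a 0) + C (a 1 - c * a 0) * X + C (a 2 - c * a 1 - d * a 0) * X ^ 2 := by
  have expand : (1 - C c * X - C d * X ^ 2) * mk a =
      mk a - C c * (mk a * X) - C d * (mk a * X * X) := by ring
  rw [expand, pow_two, ← mul_assoc (C (a 2 - _ - _))]
  ext n
  rcases n with _ | _ | _ | n
  · simp
  · simp [coeff_succ_mul_X]
  · simp [coeff_succ_mul_X]
  · simp [coeff_succ_mul_X, h]

open Equiv Fin Set

section Occurrences

variable {k m n : ℕ} {τ : Perm (Fin k)} {σ : Perm (Fin m)} {π : Perm (Fin n)}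

theorem IsOccurrence.comp_iff {e : Fin m → Fin n} (he : IsOccurrence σ π e) {f : Fin k → Fin m} :
    IsOccurrence τ π (e ∘ f) ↔ IsOccurrence τ σ f := by
  have strictMono_comp : StrictMono (e ∘ f) ↔ StrictMono f :=
    ⟨fun h _ _ hab => he.1.lt_iff_lt.1 (h hab), he.1.comp⟩
  simp only [IsOccurrence, strictMono_comp, Function.comp_apply, he.2]

theorem Contains.trans (hτ : Contains τ σ) (hσ : Contains σ π) : Contains τ π := by
  obtain ⟨f, hf⟩ := hτ
  obtain ⟨e, he⟩ := hσ
  exact ⟨e ∘ f, he.comp_iff.2 hf⟩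

theorem IsOccurrence.contains_of_range_subset {e : Fin m → Fin n} {f : Fin k → Fin n}
    (he : IsOccurrence σ π e) (hf : IsOccurrence τ π f) (hfe : range f ⊆ range e) :
    Contains τ σ := by
  obtain ⟨g, rfl⟩ := range_subset_range_iff_exists_comp.1 hfe
  exact ⟨g, he.comp_iff.1 hf⟩

theorem IsOccurrence.of_strictMono_comp_symm {f : Fin k → Fin n} (hf : StrictMono f)
    (hπf : StrictMono (π ∘ f ∘ τ.symm)) : IsOccurrence τ π f :=
  ⟨hf, fun a b => by simpa using (hπf.lt_iff_lt (a := τ a) (b := τ b)).symm⟩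

theorem not_contains_of_lt (h : n < k) : ¬ Contains τ π := by
  rintro ⟨f, hf, -⟩
  exact h.not_ge (by simpa using Fintype.card_le_of_injective f hf.injective)

theorem IsOccurrence.eq_last_of_apply_eq_last {τ : Perm (Fin (k + 1))} {π : Perm (Fin (n + 1))}
    {f : Fin (k + 1) → Fin (n + 1)} (hf : IsOccurrence τ π f) {a : Fin (k + 1)}
    (ha : π (f a) = last n) : τ a = last k := by
  by_contra hne
  have hlt : τ a < τ (τ.symm (last k)) := by simpa using lt_last_iff_ne_last.2 hne
  exact ((hf.2 _ _).1 hlt).not_ge (ha ▸ le_last _)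

end Occurrences

section InsertMax

/-- The permutation obtained from the word of `σ` by inserting a new largest entry so that it
stands at position `p`. -/
def insertMax {n : ℕ} (p : Fin (n + 1)) (σ : Perm (Fin n)) : Perm (Fin (n + 1)) :=
  (finSuccEquiv' p).trans ((optionCongr σ).trans (finSuccEquiv' (last n)).symm)

variable {k n : ℕ} (p : Fin (n + 1)) (σ : Perm (Fin n))

@[simp]
theorem insertMax_apply_self : insertMax p σ p = last n := by
  simp [insertMax]

@[simp]
theorem insertMax_apply_succAbove (i : Fin n) :
    insertMax p σ (p.succAbove i) = (σ i).castSucc := by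
  simp [insertMax]

theorem insertMax_injective : Function.Injective (insertMax p) := by
  intro σ σ' h
  ext i
  simpa using congrArg Fin.val (DFunLike.congr_fun h (p.succAbove i))

theorem insertMax_ne_insertMax {p q : Fin (n + 1)} (hpq : p ≠ q) (σ σ' : Perm (Fin n)) :
    insertMax p σ ≠ insertMax q σ' := fun h =>
  hpq <| (insertMax q σ').injective <| by
    rw [insertMax_apply_self, ← h, insertMax_apply_self]

theorem exists_insertMax_eq {p : Fin (n + 1)} {π : Perm (Fin (n + 1))} (hp : π p = last n) :
    ∃ σ, insertMax p σ = π := by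
  have ne_last (i : Fin n) : π (p.succAbove i) ≠ last n := fun hi =>
    succAbove_ne p i (π.injective (hi.trans hp.symm))
  have hinj : Function.Injective fun i => (π (p.succAbove i)).castPred (ne_last i) := fun i j hij =>
    succAbove_right_injective (π.injective (castPred_inj.1 hij))
  refine ⟨ofBijective _ hinj.bijective_of_finite, Equiv.ext fun x => ?_⟩
  rcases eq_self_or_eq_succAbove p x with rfl | ⟨i, rfl⟩
  · rw [insertMax_apply_self, hp]
  · simp

theorem isOccurrence_succAbove_insertMax : IsOccurrence σ (insertMax p σ) p.succAbove :=
  ⟨strictMono_succAbove p, fun a b => by simp⟩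

theorem contains_insertMax : Contains σ (insertMax p σ) :=
  ⟨_, isOccurrence_succAbove_insertMax p σ⟩

variable {p σ}

theorem contains_insertMax_iff_of_forall_ne {τ : Perm (Fin k)}
    (h : ∀ f, IsOccurrence τ (insertMax p σ) f → ∀ a, f a ≠ p) :
    Contains τ (insertMax p σ) ↔ Contains τ σ := by
  refine ⟨fun ⟨f, hf⟩ => ?_, fun hτ => hτ.trans (contains_insertMax p σ)⟩
  refine (isOccurrence_succAbove_insertMax p σ).contains_of_range_subset hf ?_
  rw [range_succAbove]
  rintro _ ⟨a, rfl⟩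
  exact h f hf a

theorem contains_insertMax_zero_iff {τ : Perm (Fin (k + 1))} (hτ : τ 0 ≠ last k) :
    Contains τ (insertMax 0 σ) ↔ Contains τ σ := by
  refine contains_insertMax_iff_of_forall_ne fun f hf a ha => hτ ?_
  have hf0 : f 0 = 0 := nonpos_iff_eq_zero.1 (ha ▸ hf.1.monotone (Fin.zero_le a))
  exact hf.eq_last_of_apply_eq_last (by rw [hf0, insertMax_apply_self])

theorem contains_insertMax_last_iff {τ : Perm (Fin (k + 1))} (hτ : τ (last k) ≠ last k) :
    Contains τ (insertMax (last n) σ) ↔ Contains τ σ := by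
  refine contains_insertMax_iff_of_forall_ne fun f hf a ha => hτ ?_
  have hf_last : f (last k) = last n := last_le_iff.1 (ha ▸ hf.1.monotone (le_last a))
  exact hf.eq_last_of_apply_eq_last (by rw [hf_last, insertMax_apply_self])

theorem insertMax_one_apply_zero (σ : Perm (Fin (n + 1))) :
    insertMax 1 σ 0 = (σ 0).castSucc := by
  simpa using insertMax_apply_succAbove 1 σ 0

theorem contains_insertMax_one_insertMax_zero_iff {τ : Perm (Fin (k + 2))} {b : Fin (k + 2)}
    (hb : 1 < b) (hτ : τ 0 < τ b) :
    Contains τ (insertMax 1 (insertMax 0 σ)) ↔ Contains τ σ := by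
  have h0 : τ 0 ≠ last _ := (hτ.trans_le (le_last _)).ne
  rw [← contains_insertMax_zero_iff (σ := σ) h0]
  refine contains_insertMax_iff_of_forall_ne fun f hf a ha => ?_
  have ha0 : a ≠ 0 := by
    rintro rfl
    exact h0 (hf.eq_last_of_apply_eq_last (by rw [ha, insertMax_apply_self]))
  have hf0 : f 0 = 0 := (lt_one_iff _).1 (ha ▸ hf.1 (Fin.pos_iff_ne_zero.2 ha0))
  have hfb : f b = 1 := by
    refine (insertMax 1 (insertMax 0 σ)).injective ?_
    have hlt := (hf.2 0 b).1 hτ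
    rw [hf0, insertMax_one_apply_zero, insertMax_apply_self] at hlt
    rw [insertMax_apply_self]
    exact last_le_iff.1 (castSucc_lt_iff_succ_le.1 hlt)
  have hf1 : f 1 = 0 := (lt_one_iff _).1 (hfb ▸ hf.1 hb)
  exact Fin.zero_ne_one (hf.1.injective (hf0.trans hf1.symm))

end InsertMax

section Patterns

variable {n : ℕ} {π : Perm (Fin n)} {i j k l : Fin n}

theorem contains_p132 (hij : i < j) (hjk : j < k) (hik : π i < π k) (hkj : π k < π j) :
    Contains p132 π := by
  have s0 : p132.symm 0 = 0 := (symm_apply_eq _).2 rfl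
  have s1 : p132.symm 1 = 2 := (symm_apply_eq _).2 rfl
  have s2 : p132.symm 2 = 1 := (symm_apply_eq _).2 rfl
  refine ⟨![i, j, k], .of_strictMono_comp_symm ?_ ?_⟩ <;>
    simp [strictMono_iff_lt_succ, forall_fin_succ, *]

theorem contains_p2341 (hij : i < j) (hjk : j < k) (hkl : k < l) (hli : π l < π i)
    (hπij : π i < π j) (hπjk : π j < π k) : Contains p2341 π := by
  have s0 : p2341.symm 0 = 3 := (symm_apply_eq _).2 rfl
  have s1 : p2341.symm 1 = 0 := (symm_apply_eq _).2 rfl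
  have s2 : p2341.symm 2 = 1 := (symm_apply_eq _).2 rfl
  have s3 : p2341.symm 3 = 2 := (symm_apply_eq _).2 rfl
  refine ⟨![i, j, k, l], .of_strictMono_comp_symm ?_ ?_⟩ <;>
    simp [strictMono_iff_lt_succ, forall_fin_succ, *]

theorem contains_p3241 (hij : i < j) (hjk : j < k) (hkl : k < l) (hlj : π l < π j)
    (hπji : π j < π i) (hπik : π i < π k) : Contains p3241 π := by
  have s0 : p3241.symm 0 = 3 := (symm_apply_eq _).2 rfl
  have s1 : p3241.symm 1 = 1 := (symm_apply_eq _).2 rfl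
  have s2 : p3241.symm 2 = 0 := (symm_apply_eq _).2 rfl
  have s3 : p3241.symm 3 = 2 := (symm_apply_eq _).2 rfl
  refine ⟨![i, j, k, l], .of_strictMono_comp_symm ?_ ?_⟩ <;>
    simp [strictMono_iff_lt_succ, forall_fin_succ, *]

theorem apply_lt_apply_of_not_contains_p132 (h : ¬ Contains p132 π) (hij : i < j) (hjk : j < k)
    (hkj : π k < π j) : π k < π i := by
  by_contra! hik
  exact h (contains_p132 hij hjk (hik.lt_of_ne (π.injective.ne (hij.trans hjk).ne)) hkj)

theorem apply_zero_eq_last_of_not_contains_p132_insertMax_one {σ : Perm (Fin (n + 1))}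
    (h : ¬ Contains p132 (insertMax 1 σ)) : σ 0 = last n := by
  by_contra hne
  obtain ⟨q, hq⟩ := σ.surjective (last n)
  have hq0 : q ≠ 0 := by rintro rfl; exact hne hq
  obtain ⟨r, rfl⟩ := exists_succ_eq.2 hq0
  have hmax : insertMax 1 σ (succAbove 1 r.succ) < insertMax 1 σ 1 := by
    rw [insertMax_apply_succAbove, insertMax_apply_self]
    exact castSucc_lt_last _
  have hlt := apply_lt_apply_of_not_contains_p132 h (i := 0) (by simp) (by simp [Fin.lt_def]) hmax
  rw [insertMax_one_apply_zero, insertMax_apply_succAbove, hq] at hlt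
  exact hlt.not_ge (castSucc_le_castSucc_iff.2 (le_last _))

end Patterns

section Avoiders

/-- The permutations of length `n` avoiding `132`, `2341` and `3241`. -/
def avoiders (n : ℕ) : Set (Perm (Fin n)) :=
  {π | ¬ Contains p132 π ∧ ¬ Contains p2341 π ∧ ¬ Contains p3241 π}

variable {n : ℕ}

theorem mem_avoiders_of_insertMax_mem {p : Fin (n + 1)} {σ : Perm (Fin n)}
    (h : insertMax p σ ∈ avoiders (n + 1)) : σ ∈ avoiders n :=
  h.imp (mt (·.trans (contains_insertMax p σ)))
    (And.imp (mt (·.trans (contains_insertMax p σ))) (mt (·.trans (contains_insertMax p σ))))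

theorem insertMax_zero_mem_avoiders_iff {σ : Perm (Fin n)} :
    insertMax 0 σ ∈ avoiders (n + 1) ↔ σ ∈ avoiders n := by
  simp only [avoiders, mem_ofPred_eq, contains_insertMax_zero_iff (τ := p132) (by decide),
    contains_insertMax_zero_iff (τ := p2341) (by decide),
    contains_insertMax_zero_iff (τ := p3241) (by decide)]

theorem insertMax_last_mem_avoiders_iff {σ : Perm (Fin n)} :
    insertMax (last n) σ ∈ avoiders (n + 1) ↔ σ ∈ avoiders n := by
  simp only [avoiders, mem_ofPred_eq, contains_insertMax_last_iff (τ := p132) (by decide),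
    contains_insertMax_last_iff (τ := p2341) (by decide),
    contains_insertMax_last_iff (τ := p3241) (by decide)]

theorem insertMax_one_insertMax_zero_mem_avoiders_iff {σ : Perm (Fin n)} :
    insertMax 1 (insertMax 0 σ) ∈ avoiders (n + 2) ↔ σ ∈ avoiders n := by
  simp only [avoiders, mem_ofPred_eq,
    contains_insertMax_one_insertMax_zero_iff (τ := p132) (b := 2) (by decide) (by decide),
    contains_insertMax_one_insertMax_zero_iff (τ := p2341) (b := 2) (by decide) (by decide),
    contains_insertMax_one_insertMax_zero_iff (τ := p3241) (b := 2) (by decide) (by decide)]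

theorem notMem_avoiders_of_lt_of_lt_of_lt {π : Perm (Fin n)} {i j p k : Fin n}
    (hmax : ∀ x ≠ p, π x < π p) (hij : i < j) (hjp : j < p) (hpk : p < k) : π ∉ avoiders n := by
  rintro ⟨h132, h2341, h3241⟩
  have hip : i < p := hij.trans hjp
  have hki := apply_lt_apply_of_not_contains_p132 h132 hip hpk (hmax k hpk.ne')
  have hkj := apply_lt_apply_of_not_contains_p132 h132 hjp hpk (hmax k hpk.ne')
  rcases (π.injective.ne hij.ne).lt_or_gt with hlt | hgt
  · exact h2341 (contains_p2341 hij hjp hpk hki hlt (hmax j hjp.ne))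
  · exact h3241 (contains_p3241 hij hjp hpk hkj hgt (hmax i hip.ne))

theorem eq_zero_or_eq_one_or_eq_last_of_mem_avoiders {π : Perm (Fin (n + 2))}
    (h : π ∈ avoiders (n + 2)) {p : Fin (n + 2)} (hp : π p = last (n + 1)) :
    p = 0 ∨ p = 1 ∨ p = last (n + 1) := by
  by_contra! hne
  obtain ⟨hp0, hp1, hp_last⟩ := hne
  have hmax (x) (hx : x ≠ p) : π x < π p :=
    hp ▸ lt_last_iff_ne_last.2 (hp ▸ π.injective.ne hx)
  have one_lt : 1 < p := (Fin.one_le_of_ne_zero hp0).lt_of_ne hp1.symm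
  exact notMem_avoiders_of_lt_of_lt_of_lt hmax Fin.zero_lt_one one_lt
    (lt_last_iff_ne_last.2 hp_last) h

theorem avoiders_add_two_eq_union (n : ℕ) :
    avoiders (n + 2) =
      insertMax 0 '' avoiders (n + 1) ∪ insertMax (last (n + 1)) '' avoiders (n + 1) ∪
        (insertMax 1 ∘ insertMax 0) '' avoiders n := by
  ext π
  constructor
  · intro h
    obtain ⟨p, hp⟩ := π.surjective (last (n + 1))
    obtain ⟨σ, rfl⟩ := exists_insertMax_eq hp
    have hσ : σ ∈ avoiders (n + 1) := mem_avoiders_of_insertMax_mem h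
    rcases eq_zero_or_eq_one_or_eq_last_of_mem_avoiders h hp with rfl | rfl | rfl
    · exact .inl (.inl ⟨σ, hσ, rfl⟩)
    · have hσ0 : σ 0 = last n := apply_zero_eq_last_of_not_contains_p132_insertMax_one h.1
      obtain ⟨ρ, rfl⟩ := exists_insertMax_eq hσ0
      exact .inr ⟨ρ, mem_avoiders_of_insertMax_mem hσ, rfl⟩
    · exact .inl (.inr ⟨σ, hσ, rfl⟩)
  · rintro ((⟨σ, hσ, rfl⟩ | ⟨σ, hσ, rfl⟩) | ⟨σ, hσ, rfl⟩)
    · exact insertMax_zero_mem_avoiders_iff.2 hσ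
    · exact insertMax_last_mem_avoiders_iff.2 hσ
    · exact insertMax_one_insertMax_zero_mem_avoiders_iff.2 hσ

theorem ncard_avoiders_add_three (n : ℕ) :
    (avoiders (n + 3)).ncard = 2 * (avoiders (n + 2)).ncard + (avoiders (n + 1)).ncard := by
  have disjoint_zero_last : Disjoint (insertMax 0 '' avoiders (n + 2))
      (insertMax (last (n + 2)) '' avoiders (n + 2)) := by
    refine disjoint_image_image fun σ _ σ' _ => insertMax_ne_insertMax ?_ σ σ'
    simp [Fin.ext_iff]
  have disjoint_one : Disjoint
      (insertMax 0 '' avoiders (n + 2) ∪ insertMax (last (n + 2)) '' avoiders (n + 2))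
      ((insertMax 1 ∘ insertMax 0) '' avoiders (n + 1)) := by
    refine disjoint_union_left.2 ⟨?_, ?_⟩ <;>
      refine disjoint_image_image fun σ _ σ' _ => insertMax_ne_insertMax ?_ σ _ <;>
      simp [Fin.ext_iff]
  rw [avoiders_add_two_eq_union, ncard_union_eq disjoint_one, ncard_union_eq disjoint_zero_last,
    ncard_image_of_injective _ (insertMax_injective _),
    ncard_image_of_injective _ (insertMax_injective _),
    ncard_image_of_injective _ ((insertMax_injective _).comp (insertMax_injective _)), two_mul]

theorem ncard_avoiders_of_lt_three (hn : n < 3) : (avoiders n).ncard = n.factorial := by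
  have h : avoiders n = univ := eq_univ_of_forall fun π =>
    ⟨not_contains_of_lt hn, not_contains_of_lt (by lia), not_contains_of_lt (by lia)⟩
  rw [h, ncard_univ, Nat.card_perm, Nat.card_fin]

end Avoiders

/-- The generating function `F` for permutations avoiding `132`, `2341`
and `3241` satisfies `(1 − 2X − X²)·F = 1 − X − X²`. -/
theorem stmt10 :
    ((1 : PowerSeries ℚ) - 2 * PowerSeries.X - PowerSeries.X ^ 2)
      * (PowerSeries.mk fun n => ((Nat.card {π : Equiv.Perm (Fin n) //
          ¬ Contains p132 π ∧ ¬ Contains p2341 π ∧ ¬ Contains p3241 π} : ℕ) : ℚ))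
      = 1 - PowerSeries.X - PowerSeries.X ^ 2 := by
  have recurrence (n : ℕ) : ((avoiders (n + 3)).ncard : ℚ) =
      2 * (avoiders (n + 2)).ncard + 1 * (avoiders (n + 1)).ncard := by
    rw [ncard_avoiders_add_three]
    push_cast
    ring
  have card_eq (n : ℕ) : Nat.card {π : Equiv.Perm (Fin n) //
      ¬ Contains p132 π ∧ ¬ Contains p2341 π ∧ ¬ Contains p3241 π} = (avoiders n).ncard :=
    Nat.card_coe_set_eq (avoiders n)
  simp only [card_eq]
  convert mul_mk_eq_of_linear_recurrence (a := fun n => ((avoiders n).ncard : ℚ)) recurrence using 1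
  · simp [map_ofNat]
  · norm_num [ncard_avoiders_of_lt_three, sub_eq_add_neg]
end

section
/- For every n ≥ 0, the number of permutations π ∈ S_n that avoid all three patterns 132, 123 and 213 equals the Fibonacci number Fib(n+1), where Fib(1) = Fib(2) = 1. (Equivalently, the generating function of these numbers is 1/(1 − X − X²).) -/
/-- The pattern `123 ∈ S₃` (the identity). -/
noncomputable def p123 : Equiv.Perm (Fin 3) := Equiv.ofBijective ![0, 1, 2] (by decide)

/-- The pattern `213 ∈ S₃` (zero-indexed: `0↦1, 1↦0, 2↦2`). -/
noncomputable def p213 : Equiv.Perm (Fin 3) := Equiv.ofBijective ![1, 0, 2] (by decide)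

/-!
Call a pair of positions `i < j` with `π i < π j` a noninversion of `π`. Two noninversions with the
same left end form a `132` or a `123`, and two with the same right end form a `123` or a `213`.
Avoiding all three patterns thus means that the noninversion relation is bi-unique. Noninversions
of a skew sum `τ ⊖ σ` live inside one of the two blocks, so bi-uniqueness can be checked block by
block. If `π` has a bi-unique noninversion relation, then its maximum is at the first position,
and `π = 1 ⊖ σ`, or at the second one, and `π = 12 ⊖ σ`: this is the Fibonacci recurrence.
-/

section Noninversion

/-- A noninversion of `f` is a pair of positions in increasing order whose values are in increasing
order as well, that is, an occurrence of the pattern `12`. -/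
def IsNoninversion {α β : Type*} [LT α] [LT β] (f : α → β) (i j : α) : Prop :=
  i < j ∧ f i < f j

theorem biUnique_isNoninversion_of_le_two {β : Type*} [LT β] {n : ℕ} (hn : n ≤ 2) (f : Fin n → β) :
    Relator.BiUnique (IsNoninversion f) := by
  constructor
  · rintro a b c ⟨hac, -⟩ ⟨hbc, -⟩
    omega
  · rintro a b c ⟨hab, -⟩ ⟨hac, -⟩
    omega

theorem forall_lt_zero_or_of_biUnique_isNoninversion {β : Type*} [LinearOrder β] {n : ℕ}
    {f : Fin (n + 2) → β} (hf : Function.Injective f) (h : Relator.BiUnique (IsNoninversion f)) :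
    (∀ j, 0 < j → f j < f 0) ∨ (f 0 < f 1 ∧ ∀ j, 1 < j → f j < f 0) := by
  obtain ⟨left_unique, right_unique⟩ := h
  obtain ⟨m, hm⟩ := Finite.exists_max f
  have lt_max {i : Fin (n + 2)} (hi : i < m) : IsNoninversion f i m :=
    ⟨hi, (hm i).lt_of_ne (hf.ne hi.ne)⟩
  rcases (Fin.zero_le m).eq_or_lt with rfl | m_pos
  · exact .inl fun j hj => (hm j).lt_of_ne (hf.ne hj.ne')
  · have m_eq_one : m = 1 := by
      by_contra m_ne_one
      have one_lt_m : 1 < m := (Fin.one_le_of_ne_zero m_pos.ne').lt_of_ne' m_ne_one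
      exact Fin.zero_ne_one (left_unique (lt_max m_pos) (lt_max one_lt_m))
    subst m_eq_one
    refine .inr ⟨(lt_max m_pos).2, fun j hj => ?_⟩
    have le_zero : f j ≤ f 0 := not_lt.mp fun h0j =>
      hj.ne' (right_unique ⟨m_pos.trans hj, h0j⟩ (lt_max m_pos))
    exact le_zero.lt_of_ne (hf.ne (m_pos.trans hj).ne')

end Noninversion

section Patterns

theorem isOccurrence_iff_strictMono {k n : ℕ} {τ : Equiv.Perm (Fin k)} {π : Equiv.Perm (Fin n)}
    {f : Fin k → Fin n} : IsOccurrence τ π f ↔ StrictMono f ∧ StrictMono (π ∘ f ∘ τ.symm) := by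
  refine and_congr_right fun _ => ⟨fun h a b hab => ?_, fun h a b => ?_⟩
  · simpa using (h (τ.symm a) (τ.symm b)).mp (by simpa using hab)
  · simpa using (h.lt_iff_lt (a := τ a) (b := τ b)).symm

theorem strictMono_fin_three_iff {β : Type*} [Preorder β] {f : Fin 3 → β} :
    StrictMono f ↔ f 0 < f 1 ∧ f 1 < f 2 := by
  simp [Fin.strictMono_iff_lt_succ, Fin.forall_fin_two]

theorem contains_fin_three_iff {n : ℕ} {τ : Equiv.Perm (Fin 3)} {π : Equiv.Perm (Fin n)} :
    Contains τ π ↔ ∃ i j k, i < j ∧ j < k ∧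
      π (![i, j, k] (τ.symm 0)) < π (![i, j, k] (τ.symm 1)) ∧
      π (![i, j, k] (τ.symm 1)) < π (![i, j, k] (τ.symm 2)) := by
  constructor
  · rintro ⟨f, hf⟩
    obtain ⟨hf, hπ⟩ := isOccurrence_iff_strictMono.mp hf
    have cons_eq : ![f 0, f 1, f 2] = f := List.ofFn_injective rfl
    refine ⟨f 0, f 1, f 2, hf Fin.zero_lt_one, hf (by decide), ?_⟩
    simpa only [cons_eq, Function.comp_apply] using strictMono_fin_three_iff.mp hπ
  · rintro ⟨i, j, k, hij, hjk, hπ⟩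
    exact ⟨![i, j, k], isOccurrence_iff_strictMono.mpr
      ⟨strictMono_fin_three_iff.mpr ⟨hij, hjk⟩, strictMono_fin_three_iff.mpr hπ⟩⟩

variable {n : ℕ} {π : Equiv.Perm (Fin n)}

theorem contains_p132_iff : Contains p132 π ↔ ∃ i j k, i < j ∧ j < k ∧ π i < π k ∧ π k < π j := by
  have symm_zero : p132.symm 0 = 0 := p132.symm_apply_eq.mpr rfl
  have symm_one : p132.symm 1 = 2 := p132.symm_apply_eq.mpr rfl
  have symm_two : p132.symm 2 = 1 := p132.symm_apply_eq.mpr rfl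
  simp [contains_fin_three_iff, symm_zero, symm_one, symm_two]

theorem contains_p123_iff : Contains p123 π ↔ ∃ i j k, i < j ∧ j < k ∧ π i < π j ∧ π j < π k := by
  have symm_zero : p123.symm 0 = 0 := p123.symm_apply_eq.mpr rfl
  have symm_one : p123.symm 1 = 1 := p123.symm_apply_eq.mpr rfl
  have symm_two : p123.symm 2 = 2 := p123.symm_apply_eq.mpr rfl
  simp [contains_fin_three_iff, symm_zero, symm_one, symm_two]

theorem contains_p213_iff : Contains p213 π ↔ ∃ i j k, i < j ∧ j < k ∧ π j < π i ∧ π i < π k := by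
  have symm_zero : p213.symm 0 = 1 := p213.symm_apply_eq.mpr rfl
  have symm_one : p213.symm 1 = 0 := p213.symm_apply_eq.mpr rfl
  have symm_two : p213.symm 2 = 2 := p213.symm_apply_eq.mpr rfl
  simp [contains_fin_three_iff, symm_zero, symm_one, symm_two]

theorem rightUnique_isNoninversion_iff :
    Relator.RightUnique (IsNoninversion π) ↔ ¬ Contains p132 π ∧ ¬ Contains p123 π := by
  rw [contains_p132_iff, contains_p123_iff]
  constructor
  · refine fun h => ⟨?_, ?_⟩
    · rintro ⟨i, j, k, hij, hjk, hik', hkj'⟩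
      exact hjk.ne (h ⟨hij, hik'.trans hkj'⟩ ⟨hij.trans hjk, hik'⟩)
    · rintro ⟨i, j, k, hij, hjk, hij', hjk'⟩
      exact hjk.ne (h ⟨hij, hij'⟩ ⟨hij.trans hjk, hij'.trans hjk'⟩)
  · rintro ⟨h132, h123⟩ i j k hj hk
    by_contra j_ne_k
    wlog hjk : j < k generalizing j k
    · exact this hk hj (Ne.symm j_ne_k) (lt_of_le_of_ne (not_lt.mp hjk) (Ne.symm j_ne_k))
    rcases lt_or_gt_of_ne (π.injective.ne j_ne_k) with hjk' | hkj'
    · exact h123 ⟨i, j, k, hj.1, hjk, hj.2, hjk'⟩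
    · exact h132 ⟨i, j, k, hj.1, hjk, hk.2, hkj'⟩

theorem leftUnique_isNoninversion_iff :
    Relator.LeftUnique (IsNoninversion π) ↔ ¬ Contains p123 π ∧ ¬ Contains p213 π := by
  rw [contains_p123_iff, contains_p213_iff]
  constructor
  · refine fun h => ⟨?_, ?_⟩
    · rintro ⟨i, j, k, hij, hjk, hij', hjk'⟩
      exact hij.ne (h ⟨hij.trans hjk, hij'.trans hjk'⟩ ⟨hjk, hjk'⟩)
    · rintro ⟨i, j, k, hij, hjk, hji', hik'⟩
      exact hij.ne (h ⟨hij.trans hjk, hik'⟩ ⟨hjk, hji'.trans hik'⟩)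
  · rintro ⟨h123, h213⟩ i j k hi hj
    by_contra i_ne_j
    wlog hij : i < j generalizing i j
    · exact this hj hi (Ne.symm i_ne_j) (lt_of_le_of_ne (not_lt.mp hij) (Ne.symm i_ne_j))
    rcases lt_or_gt_of_ne (π.injective.ne i_ne_j) with hij' | hji'
    · exact h123 ⟨i, j, k, hij, hj.1, hij', hj.2⟩
    · exact h213 ⟨i, j, k, hij, hj.1, hji', hi.2⟩

theorem biUnique_isNoninversion_iff :
    Relator.BiUnique (IsNoninversion π) ↔
      ¬ Contains p132 π ∧ ¬ Contains p123 π ∧ ¬ Contains p213 π := by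
  rw [Relator.BiUnique, leftUnique_isNoninversion_iff, rightUnique_isNoninversion_iff]
  tauto

end Patterns

section BiUnique

variable {α β : Type*}

theorem biUnique_liftRel_iff {r : α → α → Prop} {s : β → β → Prop} :
    Relator.BiUnique (Sum.LiftRel r s) ↔ Relator.BiUnique r ∧ Relator.BiUnique s := by
  simp [Relator.BiUnique, Relator.LeftUnique, Relator.RightUnique, and_and_and_comm]

theorem biUnique_onFun_iff (e : α ≃ β) {r : β → β → Prop} :
    Relator.BiUnique (Function.onFun r e) ↔ Relator.BiUnique r := by
  simp [Relator.BiUnique, Relator.LeftUnique, Relator.RightUnique, e.surjective.forall]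

end BiUnique

section SkewSum

/-- The positions of a skew sum: the positions of the first summand, followed by those of the
second one. -/
def skewPosition (k n : ℕ) : Fin k ⊕ Fin n ≃ Fin (n + k) :=
  finSumFinEquiv.trans (finCongr (Nat.add_comm k n))

/-- The values of a skew sum: the values of the first summand lie above those of the second one. -/
def skewValue (k n : ℕ) : Fin k ⊕ Fin n ≃ Fin (n + k) :=
  (Equiv.sumComm _ _).trans finSumFinEquiv

/-- The skew sum `τ ⊖ σ`, which places `τ` before and above `σ`. Its size is written `n + k` so
that `k = 1` and `k = 2` give `n + 1` and `n + 2` definitionally. -/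
def skewSum {k n : ℕ} (τ : Equiv.Perm (Fin k)) (σ : Equiv.Perm (Fin n)) :
    Equiv.Perm (Fin (n + k)) :=
  ((skewPosition k n).symm.trans (Equiv.sumCongr τ σ)).trans (skewValue k n)

variable {k n : ℕ}

@[simp]
theorem val_skewPosition_inl (i : Fin k) : (skewPosition k n (.inl i) : ℕ) = i := by
  simp [skewPosition]

@[simp]
theorem val_skewPosition_inr (j : Fin n) : (skewPosition k n (.inr j) : ℕ) = k + j := by
  simp [skewPosition, Nat.add_comm]

@[simp]
theorem val_skewValue_inl (i : Fin k) : (skewValue k n (.inl i) : ℕ) = n + i := by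
  simp [skewValue]

@[simp]
theorem val_skewValue_inr (j : Fin n) : (skewValue k n (.inr j) : ℕ) = j := by
  simp [skewValue]

theorem skewPosition_inl_zero : skewPosition (k + 1) n (.inl 0) = 0 :=
  Fin.ext (by simp)

theorem skewPosition_inl_one : skewPosition (k + 2) n (.inl 1) = 1 :=
  Fin.ext ((val_skewPosition_inl 1).trans (Fin.val_one (n + k)).symm)

theorem skewSum_skewPosition (τ : Equiv.Perm (Fin k)) (σ : Equiv.Perm (Fin n))
    (x : Fin k ⊕ Fin n) :
    skewSum τ σ (skewPosition k n x) = skewValue k n (Sum.map τ σ x) := by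
  simp [skewSum]

theorem isNoninversion_skewSum_iff {τ : Equiv.Perm (Fin k)} {σ : Equiv.Perm (Fin n)}
    {x y : Fin k ⊕ Fin n} :
    IsNoninversion (skewSum τ σ) (skewPosition k n x) (skewPosition k n y) ↔
      Sum.LiftRel (IsNoninversion τ) (IsNoninversion σ) x y := by
  rcases x with i | i <;> rcases y with j | j <;>
    simp only [IsNoninversion, skewSum_skewPosition, Sum.map_inl, Sum.map_inr, Fin.lt_def,
      val_skewPosition_inl, val_skewPosition_inr, val_skewValue_inl, val_skewValue_inr,
      Sum.liftRel_inl_inl, Sum.liftRel_inr_inr, Sum.not_liftRel_inl_inr,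
      Sum.not_liftRel_inr_inl, iff_false] <;>
    omega

theorem biUnique_isNoninversion_skewSum_iff {τ : Equiv.Perm (Fin k)} {σ : Equiv.Perm (Fin n)} :
    Relator.BiUnique (IsNoninversion (skewSum τ σ)) ↔
      Relator.BiUnique (IsNoninversion τ) ∧ Relator.BiUnique (IsNoninversion σ) := by
  have onFun_eq_liftRel : Function.onFun (IsNoninversion (skewSum τ σ)) (skewPosition k n) =
      Sum.LiftRel (IsNoninversion τ) (IsNoninversion σ) := by
    ext x y
    exact isNoninversion_skewSum_iff
  rw [← biUnique_onFun_iff (skewPosition k n), onFun_eq_liftRel, biUnique_liftRel_iff]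

theorem val_skewSum_zero (τ : Equiv.Perm (Fin (k + 1))) (σ : Equiv.Perm (Fin n)) :
    (skewSum τ σ 0 : ℕ) = n + τ 0 := by
  rw [← skewPosition_inl_zero, skewSum_skewPosition, Sum.map_inl, val_skewValue_inl]

theorem skewSum_right_injective (τ : Equiv.Perm (Fin k)) :
    Function.Injective (skewSum τ : Equiv.Perm (Fin n) → Equiv.Perm (Fin (n + k))) := by
  intro σ₁ σ₂ h
  ext j
  simpa [skewSum_skewPosition] using
    congrArg (fun π => (π (skewPosition k n (.inr j)) : ℕ)) h

theorem skewValue_symm_mem_range_inl {v : Fin (n + k)} (hv : n ≤ v) :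
    (skewValue k n).symm v ∈ Set.range Sum.inl := by
  obtain ⟨i | j, rfl⟩ := (skewValue k n).surjective v
  · simp
  · simp only [val_skewValue_inr] at hv
    omega

theorem exists_skewSum_eq {π : Equiv.Perm (Fin (n + k))}
    (h : ∀ i j : Fin (n + k), (i : ℕ) < k → k ≤ j → π j < π i) :
    ∃ τ σ, skewSum τ σ = π := by
  have le_apply (i : Fin k) : n ≤ π (skewPosition k n (.inl i)) := by
    -- The `n` values at the later positions all lie below this one.
    let later : Fin n ↪ Fin (n + k) :=
      (Function.Embedding.inr.trans (skewPosition k n).toEmbedding).trans π.toEmbedding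
    have later_subset :
        Finset.univ.map later ⊆ Finset.Iio (π (skewPosition k n (.inl i))) := by
      intro v hv
      obtain ⟨j, -, rfl⟩ := Finset.mem_map.mp hv
      exact Finset.mem_Iio.mpr (h _ _ (by simp) (by simp))
    simpa using Finset.card_le_card later_subset
  let ρ : Equiv.Perm (Fin k ⊕ Fin n) := ((skewPosition k n).trans π).trans (skewValue k n).symm
  have ρ_mapsTo : Set.MapsTo ρ (Set.range Sum.inl) (Set.range Sum.inl) := by
    rintro _ ⟨i, rfl⟩
    exact skewValue_symm_mem_range_inl (le_apply i)
  obtain ⟨⟨τ, σ⟩, hρ⟩ := Equiv.Perm.mem_sumCongrHom_range_of_perm_mapsTo_inl ρ_mapsTo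
  refine ⟨τ, σ, ?_⟩
  change ((skewPosition k n).symm.trans (Equiv.Perm.sumCongrHom _ _ (τ, σ))).trans _ = π
  rw [hρ]
  ext
  simp [ρ]

theorem exists_skewSum_fin_one_eq {π : Equiv.Perm (Fin (n + 1))}
    (h : ∀ j, 0 < j → π j < π 0) : ∃ σ, skewSum (k := 1) 1 σ = π := by
  obtain ⟨τ, σ, hπ⟩ := exists_skewSum_eq (k := 1) (π := π) fun i j hi hj => by
    obtain rfl : i = 0 := Fin.ext (by simpa using hi)
    exact h j hj
  exact ⟨σ, Subsingleton.elim τ 1 ▸ hπ⟩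

theorem perm_fin_two_eq_one_of_lt : ∀ τ : Equiv.Perm (Fin 2), τ 0 < τ 1 → τ = 1 := by
  decide

theorem exists_skewSum_fin_two_eq {π : Equiv.Perm (Fin (n + 2))}
    (h01 : π 0 < π 1) (h : ∀ j, 1 < j → π j < π 0) :
    ∃ σ, skewSum (k := 2) 1 σ = π := by
  obtain ⟨τ, σ, rfl⟩ := exists_skewSum_eq (k := 2) (π := π) fun i j hi hj => by
    have hj0 : π j < π 0 := h j hj
    obtain rfl | rfl : i = 0 ∨ i = 1 := by
      simp only [Fin.ext_iff, Fin.val_zero, Fin.val_one]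
      omega
    · exact hj0
    · exact hj0.trans h01
  have noninversion : IsNoninversion (skewSum τ σ) 0 1 := ⟨Fin.zero_lt_one, h01⟩
  rw [← skewPosition_inl_zero, ← skewPosition_inl_one, isNoninversion_skewSum_iff,
    Sum.liftRel_inl_inl] at noninversion
  exact ⟨σ, perm_fin_two_eq_one_of_lt τ noninversion.2 ▸ rfl⟩

end SkewSum

section Counting

/-- The permutations of size `n` whose noninversion relation is bi-unique, that is, in which every
position is the left end of at most one noninversion and the right end of at most one. -/
def biUniquePerms (n : ℕ) : Set (Equiv.Perm (Fin n)) :=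
  {π | Relator.BiUnique (IsNoninversion π)}

theorem skewSum_mem_biUniquePerms_iff {k n : ℕ} (hk : k ≤ 2) {τ : Equiv.Perm (Fin k)}
    {σ : Equiv.Perm (Fin n)} : skewSum τ σ ∈ biUniquePerms (n + k) ↔ σ ∈ biUniquePerms n :=
  biUnique_isNoninversion_skewSum_iff.trans
    (and_iff_right (biUnique_isNoninversion_of_le_two hk τ))

theorem biUniquePerms_add_two (n : ℕ) :
    biUniquePerms (n + 2) =
      skewSum (k := 1) 1 '' biUniquePerms (n + 1) ∪
        skewSum (k := 2) 1 '' biUniquePerms n := by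
  ext π
  constructor
  · intro hπ
    rcases forall_lt_zero_or_of_biUnique_isNoninversion π.injective hπ with h | ⟨h01, h⟩
    · obtain ⟨σ, rfl⟩ := exists_skewSum_fin_one_eq h
      exact .inl ⟨σ, (skewSum_mem_biUniquePerms_iff one_le_two).mp hπ, rfl⟩
    · obtain ⟨σ, rfl⟩ := exists_skewSum_fin_two_eq h01 h
      exact .inr ⟨σ, (skewSum_mem_biUniquePerms_iff le_rfl).mp hπ, rfl⟩
  · rintro (⟨σ, hσ, rfl⟩ | ⟨σ, hσ, rfl⟩)
    · exact (skewSum_mem_biUniquePerms_iff one_le_two).mpr hσ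
    · exact (skewSum_mem_biUniquePerms_iff le_rfl).mpr hσ

theorem ncard_biUniquePerms_add_two (n : ℕ) :
    (biUniquePerms (n + 2)).ncard = (biUniquePerms (n + 1)).ncard + (biUniquePerms n).ncard := by
  have disjoint : Disjoint (skewSum (k := 1) 1 '' biUniquePerms (n + 1))
      (skewSum (k := 2) 1 '' biUniquePerms n) := by
    rw [Set.disjoint_left]
    rintro _ ⟨σ, -, rfl⟩ ⟨σ', -, h⟩
    have apply_zero := congrArg (fun π => (π 0 : ℕ)) h
    simp only [val_skewSum_zero, Equiv.Perm.one_apply, Fin.val_zero] at apply_zero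
    omega
  rw [biUniquePerms_add_two, Set.ncard_union_eq disjoint,
    Set.ncard_image_of_injective _ (skewSum_right_injective _),
    Set.ncard_image_of_injective _ (skewSum_right_injective _)]

theorem ncard_biUniquePerms_of_le_two {n : ℕ} (hn : n ≤ 2) :
    (biUniquePerms n).ncard = n.factorial := by
  have eq_univ : biUniquePerms n = Set.univ :=
    Set.eq_univ_of_forall fun π => biUnique_isNoninversion_of_le_two hn π
  rw [eq_univ, Set.ncard_univ, Nat.card_perm, Nat.card_fin]

theorem ncard_biUniquePerms (n : ℕ) : (biUniquePerms n).ncard = Nat.fib (n + 1) := by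
  induction n using Nat.twoStepInduction with
  | zero => exact ncard_biUniquePerms_of_le_two zero_le_two
  | one => exact ncard_biUniquePerms_of_le_two one_le_two
  | more n ih ih_succ =>
    rw [ncard_biUniquePerms_add_two, ih, ih_succ, Nat.fib_add_two (n := n + 1), add_comm]

end Counting

/-- The number of permutations of `{1,…,n}` avoiding `132`, `123` and
`213` equals the Fibonacci number `Fib(n+1)` (with `Fib 1 = Fib 2 = 1`). -/
theorem stmt11 (n : ℕ) :
    Nat.card {π : Equiv.Perm (Fin n) //
        ¬ Contains p132 π ∧ ¬ Contains p123 π ∧ ¬ Contains p213 π}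
      = Nat.fib (n + 1) := by
  rw [← ncard_biUniquePerms, ← Nat.card_coe_set_eq]
  exact Nat.card_congr (Equiv.subtypeEquivRight fun _ => biUnique_isNoninversion_iff.symm)
end

section
/- Let k ≥ 1 and let G(X) = Σ_{n≥0} |{π ∈ S_n : π avoids 132 and contains the increasing pattern 12⋯k exactly once}|·Xⁿ ∈ ℚ⟦X⟧. Then G(X)·p_k(X)² = X^k. (Equivalently, G(x) = 1 / U_k(1/(2√x))².) -/
/-- `pU (m+1)` is the polynomial `p_m(X) = X^{m/2}·U_m(1/(2√X))` built from the Chebyshev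
recurrence: `pU 0 = p_{−1} = 0`, `pU 1 = p_0 = 1`, and `p_{m+1} = p_m − X·p_{m−1}`. -/
noncomputable def pU : ℕ → Polynomial ℚ
  | 0 => 0
  | 1 => 1
  | m + 2 => pU (m + 1) - Polynomial.X * pU m

/-!
Let `π` avoid `132`. Everything to the left of the maximum of `π` is larger than everything to its
right, and both sides avoid `132` again. Iterating this splitting identifies `π` with a binary tree
whose root is the maximum. A nonempty increasing subsequence lies to the right of the maximum, or
consists of entries to its left, possibly followed by the maximum itself. So increasing subsequences
become chains of nodes, each in the left subtree of the next.

If a tree has a chain of `k + 2` nodes, it has at least two chains of `k + 1` nodes. Hence the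
generating functions `F k` and `G k` of the trees with no and with exactly one chain of `k` nodes
satisfy, by inspection of the root,
`F (k + 1) = 1 + X * F k * F (k + 1)` and
`G (k + 2) = X * (G (k + 1) * F (k + 2) + F (k + 1) * G (k + 2))`,
and the Chebyshev recurrence gives `F k = p_{k-1} / p_k` and `G k = X ^ k / p_k ^ 2`.
-/

section TreeSeries

open BinaryTree PowerSeries

variable {R : Type*} [Semiring R]

/-- The ordinary generating function of weighted binary trees, by number of nodes. -/
noncomputable def treeSeries (w : BinaryTree Unit → R) : R⟦X⟧ :=
  PowerSeries.mk fun n => ∑ t ∈ treesOfNumNodesEq n, w t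

/-- The weight on trees that is multiplicative over the two subtrees of the root
and vanishes on the empty tree. -/
def nodeWeight (u v : BinaryTree Unit → R) : BinaryTree Unit → R
  | .nil => 0
  | .node _ l r => u l * v r

theorem treeSeries_add (u v : BinaryTree Unit → R) :
    treeSeries (u + v) = treeSeries u + treeSeries v := by
  ext n
  simp [treeSeries, Finset.sum_add_distrib]

theorem treeSeries_single_nil : treeSeries (Pi.single nil (1 : R)) = 1 := by
  ext n
  simp [treeSeries, coeff_one, eq_comm]

theorem sum_treesOfNumNodesEq_succ {M : Type*} [AddCommMonoid M] (w : BinaryTree Unit → M)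
    (n : ℕ) :
    ∑ t ∈ treesOfNumNodesEq (n + 1), w t =
      ∑ ij ∈ Finset.HasAntidiagonal.antidiagonal n, ∑ l ∈ treesOfNumNodesEq ij.1,
        ∑ r ∈ treesOfNumNodesEq ij.2, w (l △ r) := by
  rw [treesOfNumNodesEq_succ, Finset.sum_biUnion]
  · simp only [Finset.sum_map, Finset.sum_product]
    rfl
  · simp_rw [Set.PairwiseDisjoint, Set.Pairwise, Finset.disjoint_left]
    aesop

theorem treeSeries_nodeWeight (u v : BinaryTree Unit → R) :
    treeSeries (nodeWeight u v) = X * (treeSeries u * treeSeries v) := by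
  ext (_ | n)
  · simp [treeSeries, nodeWeight]
  · rw [coeff_succ_X_mul, coeff_mul]
    simp only [treeSeries, coeff_mk, sum_treesOfNumNodesEq_succ, nodeWeight, Finset.sum_mul_sum]

end TreeSeries

section LeftChains

open BinaryTree PowerSeries

/-- The number of `k`-tuples of nodes each of which, except the last, lies in the left subtree of
the next one. For `k + 1` and a nonempty tree, the tuples are split by their last node: in the left
subtree, the root, or in the right subtree. -/
def leftChainCount : ℕ → BinaryTree Unit → ℕ
  | 0, _ => 1
  | _ + 1, .nil => 0
  | k + 1, .node _ l r => leftChainCount (k + 1) l + leftChainCount k l + leftChainCount (k + 1) r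

@[simp]
theorem leftChainCount_zero (t : BinaryTree Unit) : leftChainCount 0 t = 1 := by
  cases t <;> rfl

@[simp]
theorem leftChainCount_succ_nil (k : ℕ) : leftChainCount (k + 1) nil = 0 := rfl

theorem leftChainCount_succ_node (k : ℕ) (l r : BinaryTree Unit) :
    leftChainCount (k + 1) (l △ r) =
      leftChainCount (k + 1) l + leftChainCount k l + leftChainCount (k + 1) r := rfl

theorem leftChainCount_succ_eq_zero {t : BinaryTree Unit} {k : ℕ} (h : leftChainCount k t = 0) :
    leftChainCount (k + 1) t = 0 := by
  induction t using unitRecOn generalizing k with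
  | base => rfl
  | ind l r ihl ihr =>
    cases k with
    | zero => simp at h
    | succ k =>
      rw [leftChainCount_succ_node] at h ⊢
      have := @ihl (k + 1)
      have := @ihr (k + 1)
      omega

-- Deleting the first or the last node of a chain with `k + 2` nodes gives two different chains.
theorem leftChainCount_add_two_eq_zero {t : BinaryTree Unit} {k : ℕ}
    (h : leftChainCount (k + 1) t ≤ 1) : leftChainCount (k + 2) t = 0 := by
  induction t using unitRecOn with
  | base => rfl
  | ind l r ihl ihr => grind [leftChainCount_succ_node, leftChainCount_succ_eq_zero]

theorem leftChainCount_succ_node_eq_zero_iff {k : ℕ} {l r : BinaryTree Unit} :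
    leftChainCount (k + 1) (l △ r) = 0 ↔
      leftChainCount k l = 0 ∧ leftChainCount (k + 1) r = 0 := by
  grind [leftChainCount_succ_node, leftChainCount_succ_eq_zero]

theorem leftChainCount_one_node_eq_one_iff {l r : BinaryTree Unit} :
    leftChainCount 1 (l △ r) = 1 ↔ leftChainCount 1 l = 0 ∧ leftChainCount 1 r = 0 := by
  grind [leftChainCount_succ_node, leftChainCount_zero]

theorem leftChainCount_add_two_node_eq_one_iff {k : ℕ} {l r : BinaryTree Unit} :
    leftChainCount (k + 2) (l △ r) = 1 ↔
      leftChainCount (k + 1) l = 1 ∧ leftChainCount (k + 2) r = 0 ∨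
        leftChainCount (k + 1) l = 0 ∧ leftChainCount (k + 2) r = 1 := by
  grind [leftChainCount_succ_node, leftChainCount_add_two_eq_zero]

/-- The `0`-`1` weight of the trees with exactly `j` left chains of `k` nodes. -/
def leftChainIndicator (k j : ℕ) (t : BinaryTree Unit) : ℚ :=
  if leftChainCount k t = j then 1 else 0

/-- The generating function of the binary trees with exactly `j` left chains of `k` nodes. -/
noncomputable def leftChainSeries (k j : ℕ) : ℚ⟦X⟧ :=
  treeSeries (leftChainIndicator k j)

theorem coeff_leftChainSeries (k j n : ℕ) :
    coeff n (leftChainSeries k j) =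
      (((treesOfNumNodesEq n).filter fun t => leftChainCount k t = j).card : ℚ) := by
  simp [leftChainSeries, treeSeries, leftChainIndicator]

theorem leftChainSeries_zero_zero : leftChainSeries 0 0 = 0 := by
  ext n
  simp [coeff_leftChainSeries]

theorem leftChainIndicator_succ_zero (k : ℕ) :
    leftChainIndicator (k + 1) 0 =
      Pi.single nil 1 + nodeWeight (leftChainIndicator k 0) (leftChainIndicator (k + 1) 0) := by
  funext t
  induction t using unitRecOn with
  | base => simp [leftChainIndicator, nodeWeight]
  | ind l r =>
    simp [leftChainIndicator, nodeWeight, leftChainCount_succ_node_eq_zero_iff, ← ite_and,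
      and_comm]

theorem leftChainIndicator_one_one :
    leftChainIndicator 1 1 = nodeWeight (leftChainIndicator 1 0) (leftChainIndicator 1 0) := by
  funext t
  induction t using unitRecOn with
  | base => simp [leftChainIndicator, nodeWeight]
  | ind l r =>
    simp [leftChainIndicator, nodeWeight, leftChainCount_one_node_eq_one_iff, ← ite_and, and_comm]

theorem leftChainIndicator_add_two_one (k : ℕ) :
    leftChainIndicator (k + 2) 1 =
      nodeWeight (leftChainIndicator (k + 1) 1) (leftChainIndicator (k + 2) 0) +
        nodeWeight (leftChainIndicator (k + 1) 0) (leftChainIndicator (k + 2) 1) := by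
  funext t
  induction t using unitRecOn with
  | base => simp [leftChainIndicator, nodeWeight]
  | ind l r =>
    simp only [leftChainIndicator, nodeWeight, Pi.add_apply,
      leftChainCount_add_two_node_eq_one_iff]
    grind

theorem leftChainSeries_succ_zero (k : ℕ) :
    leftChainSeries (k + 1) 0 = 1 + X * (leftChainSeries k 0 * leftChainSeries (k + 1) 0) := by
  have series_eq := congrArg treeSeries (leftChainIndicator_succ_zero k)
  rwa [treeSeries_add, treeSeries_single_nil, treeSeries_nodeWeight] at series_eq

theorem leftChainSeries_one_zero : leftChainSeries 1 0 = 1 := by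
  simpa [leftChainSeries_zero_zero] using leftChainSeries_succ_zero 0

theorem leftChainSeries_one_one : leftChainSeries 1 1 = X := by
  calc leftChainSeries 1 1
      = X * (leftChainSeries 1 0 * leftChainSeries 1 0) := by
        rw [leftChainSeries, leftChainIndicator_one_one, treeSeries_nodeWeight, leftChainSeries]
    _ = X := by rw [leftChainSeries_one_zero, mul_one, mul_one]

theorem leftChainSeries_add_two_one (k : ℕ) :
    leftChainSeries (k + 2) 1 = X * (leftChainSeries (k + 1) 1 * leftChainSeries (k + 2) 0) +
      X * (leftChainSeries (k + 1) 0 * leftChainSeries (k + 2) 1) := by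
  have series_eq := congrArg treeSeries (leftChainIndicator_add_two_one k)
  rwa [treeSeries_add, treeSeries_nodeWeight, treeSeries_nodeWeight] at series_eq

theorem coe_pU_add_two (m : ℕ) :
    (pU (m + 2) : ℚ⟦X⟧) = (pU (m + 1) : ℚ⟦X⟧) - X * (pU m : ℚ⟦X⟧) := by
  simp [pU]

theorem leftChainSeries_zero_mul_pU (k : ℕ) :
    leftChainSeries k 0 * (pU (k + 1) : ℚ⟦X⟧) = pU k := by
  induction k with
  | zero => simp [leftChainSeries_zero_zero, pU]
  | succ k ih =>
    rw [coe_pU_add_two]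
    linear_combination (leftChainSeries (k + 1) 0 * X) * ih +
      (pU (k + 1) : ℚ⟦X⟧) * leftChainSeries_succ_zero k

theorem leftChainSeries_add_two_one_mul_pU (k : ℕ) :
    leftChainSeries (k + 2) 1 * (pU (k + 3) : ℚ⟦X⟧) =
      X * leftChainSeries (k + 1) 1 * leftChainSeries (k + 2) 0 * (pU (k + 2) : ℚ⟦X⟧) := by
  rw [coe_pU_add_two]
  linear_combination (leftChainSeries (k + 2) 1 * X) * leftChainSeries_zero_mul_pU (k + 1) +
    (pU (k + 2) : ℚ⟦X⟧) * leftChainSeries_add_two_one k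

theorem leftChainSeries_one_mul_pU_sq (k : ℕ) :
    leftChainSeries (k + 1) 1 * (pU (k + 2) : ℚ⟦X⟧) ^ 2 = X ^ (k + 1) := by
  induction k with
  | zero => simp [leftChainSeries_one_one, pU]
  | succ k ih =>
    calc leftChainSeries (k + 2) 1 * (pU (k + 3) : ℚ⟦X⟧) ^ 2
        = X * leftChainSeries (k + 1) 1 * (pU (k + 2) : ℚ⟦X⟧) *
            (leftChainSeries (k + 2) 0 * (pU (k + 3) : ℚ⟦X⟧)) := by
          linear_combination (pU (k + 3) : ℚ⟦X⟧) * leftChainSeries_add_two_one_mul_pU k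
      _ = X * (leftChainSeries (k + 1) 1 * (pU (k + 2) : ℚ⟦X⟧) ^ 2) := by
          rw [leftChainSeries_zero_mul_pU]
          ring
      _ = X ^ (k + 2) := by rw [ih, ← pow_succ']

end LeftChains

section Words

variable {α : Type*} [LinearOrder α]

/-- The word `w` has no three letters in the relative order of `132`. -/
def Avoids132 (w : List α) : Prop :=
  w.Triplewise fun a b c => ¬ (a < c ∧ c < b)

/-- The word `L ++ m :: R` has its unique maximum `m` between `L` and `R`, and every letter of `L`
exceeds every letter of `R`. This is the shape of a `132`-avoiding word around its maximum. -/
structure IsSkewSplit (L : List α) (m : α) (R : List α) : Prop where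
  left_lt : ∀ a ∈ L, a < m
  right_lt : ∀ c ∈ R, c < m
  right_lt_left : ∀ a ∈ L, ∀ c ∈ R, c < a

/-- The strictly increasing subwords of `w` of length `k`. -/
def increasingSublists (k : ℕ) (w : List α) : Finset (List α) :=
  {s ∈ (w.sublistsLen k).toFinset | s.Pairwise (· < ·)}

variable {k : ℕ} {m : α} {w s L R : List α}

theorem mem_increasingSublists :
    s ∈ increasingSublists k w ↔ s.Sublist w ∧ s.length = k ∧ s.Pairwise (· < ·) := by
  simp [increasingSublists, and_assoc]

theorem IsSkewSplit.avoids132_iff (h : IsSkewSplit L m R) :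
    Avoids132 (L ++ m :: R) ↔ Avoids132 L ∧ Avoids132 R := by
  obtain ⟨left_lt, right_lt, right_lt_left⟩ := h
  simp only [Avoids132, List.triplewise_append, List.triplewise_cons,
    List.pairwise_iff_forall_sublist]
  grind [List.Sublist.subset]

theorem Avoids132.isSkewSplit (h : Avoids132 (L ++ m :: R)) (left_lt : ∀ a ∈ L, a < m)
    (right_lt : ∀ c ∈ R, c < m) (disjoint : L.Disjoint R) : IsSkewSplit L m R where
  left_lt := left_lt
  right_lt := right_lt
  right_lt_left a ha c hc := by
    have not_132 : ¬ (a < c ∧ c < m) :=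
      List.rel_of_pairwise_cons ((List.triplewise_append.1 h).2.2.1 a ha) hc
    have ne : a ≠ c := fun hac => disjoint ha (hac ▸ hc)
    grind

theorem Avoids132.exists_isSkewSplit (h : Avoids132 w) (nodup : w.Nodup) (ne_nil : w ≠ []) :
    ∃ L m R, w = L ++ m :: R ∧ IsSkewSplit L m R := by
  obtain ⟨m, hm, le_max⟩ := w.toFinset.exists_max_image id (by simpa using ne_nil)
  obtain ⟨L, R, rfl⟩ := List.append_of_mem (List.mem_toFinset.1 hm)
  have lt_max (a : α) (ha : a ∈ L ++ m :: R) (ne : a ≠ m) : a < m :=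
    lt_of_le_of_ne (le_max a (List.mem_toFinset.2 ha)) ne
  refine ⟨L, m, R, rfl, h.isSkewSplit ?_ ?_ ?_⟩ <;> grind [List.Disjoint]

theorem card_increasingSublists_zero (w : List α) : (increasingSublists 0 w).card = 1 := by
  simp [increasingSublists, Finset.filter_singleton]

theorem increasingSublists_succ_nil (k : ℕ) : increasingSublists (k + 1) ([] : List α) = ∅ := by
  simp [increasingSublists]

theorem increasingSublists_succ_append (h : ∀ a ∈ L, ∀ c ∈ R, c < a) (k : ℕ) :
    increasingSublists (k + 1) (L ++ R) =
      increasingSublists (k + 1) L ∪ increasingSublists (k + 1) R := by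
  ext s
  simp only [Finset.mem_union, mem_increasingSublists]
  constructor
  · rintro ⟨sublist, length_eq, increasing⟩
    obtain ⟨s₁, s₂, rfl, hs₁, hs₂⟩ := List.sublist_append_iff.1 sublist
    rcases s₁ with _ | ⟨a, s₁⟩
    · exact .inr ⟨hs₂, length_eq, increasing⟩
    rcases s₂ with _ | ⟨c, s₂⟩
    · rw [List.append_nil] at length_eq increasing ⊢
      exact .inl ⟨hs₁, length_eq, increasing⟩
    · have lt : a < c := (List.pairwise_append.1 increasing).2.2 a (by simp) c (by simp)
      exact absurd lt (h a (hs₁.subset (by simp)) c (hs₂.subset (by simp))).not_gt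
  · rintro (⟨sublist, hs⟩ | ⟨sublist, hs⟩)
    · exact ⟨sublist.trans (List.sublist_append_left L R), hs⟩
    · exact ⟨sublist.trans (List.sublist_append_right L R), hs⟩

theorem card_increasingSublists_succ_append (h : ∀ a ∈ L, ∀ c ∈ R, c < a) (k : ℕ) :
    (increasingSublists (k + 1) (L ++ R)).card =
      (increasingSublists (k + 1) L).card + (increasingSublists (k + 1) R).card := by
  rw [increasingSublists_succ_append h, Finset.card_union_of_disjoint]
  rw [Finset.disjoint_left]
  intro s hsL hsR
  rw [mem_increasingSublists] at hsL hsR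
  obtain ⟨a, ha⟩ := List.exists_mem_of_length_eq_add_one hsL.2.1
  exact lt_irrefl a (h a (hsL.1.subset ha) a (hsR.1.subset ha))

theorem increasingSublists_succ_concat (h : ∀ a ∈ L, a < m) (k : ℕ) :
    increasingSublists (k + 1) (L ++ [m]) =
      increasingSublists (k + 1) L ∪ (increasingSublists k L).image (· ++ [m]) := by
  ext s
  simp only [Finset.mem_union, Finset.mem_image, mem_increasingSublists]
  constructor
  · rintro ⟨sublist, length_eq, increasing⟩
    obtain ⟨s₁, s₂, rfl, hs₁, hs₂⟩ := List.sublist_append_iff.1 sublist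
    rcases List.sublist_singleton.1 hs₂ with rfl | rfl
    · rw [List.append_nil] at length_eq increasing ⊢
      exact .inl ⟨hs₁, length_eq, increasing⟩
    · exact .inr ⟨s₁, ⟨hs₁, by simpa using length_eq, (List.pairwise_append.1 increasing).1⟩, rfl⟩
  · rintro (⟨sublist, hs⟩ | ⟨s, ⟨sublist, length_eq, increasing⟩, rfl⟩)
    · exact ⟨sublist.trans (List.sublist_append_left L [m]), hs⟩
    · refine ⟨sublist.append_right [m], by simp [length_eq], ?_⟩
      simpa [List.pairwise_append, increasing] using fun a ha => h a (sublist.subset ha)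

theorem card_increasingSublists_succ_concat (h : ∀ a ∈ L, a < m) (k : ℕ) :
    (increasingSublists (k + 1) (L ++ [m])).card =
      (increasingSublists (k + 1) L).card + (increasingSublists k L).card := by
  rw [increasingSublists_succ_concat h, Finset.card_union_of_disjoint,
    Finset.card_image_of_injective _ (List.append_left_injective [m])]
  rw [Finset.disjoint_left]
  intro s hs hs_image
  obtain ⟨s, -, rfl⟩ := Finset.mem_image.1 hs_image
  exact lt_irrefl m (h m ((mem_increasingSublists.1 hs).1.subset (by simp)))

theorem IsSkewSplit.card_increasingSublists_succ (h : IsSkewSplit L m R) (k : ℕ) :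
    (increasingSublists (k + 1) (L ++ m :: R)).card =
      (increasingSublists (k + 1) L).card + (increasingSublists k L).card +
        (increasingSublists (k + 1) R).card := by
  have right_lt : ∀ a ∈ L ++ [m], ∀ c ∈ R, c < a := by
    simpa [or_imp, forall_and] using ⟨h.right_lt_left, h.right_lt⟩
  rw [List.append_cons, card_increasingSublists_succ_append right_lt,
    card_increasingSublists_succ_concat h.left_lt]

end Words

section TreeWords

open BinaryTree

/-- The word of the `132`-avoiding permutation of the interval `[o, o + t.numNodes)` encoded by the
tree `t`: the root is the maximum, and the left and the right subtree encode what precedes and what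
follows it. Everything before the maximum is larger than everything after it, whence the shift of
the offset by `r.numNodes`. -/
def treeWord : ℕ → BinaryTree Unit → List ℕ
  | _, .nil => []
  | o, .node _ l r =>
    treeWord (o + r.numNodes) l ++ (o + r.numNodes + l.numNodes) :: treeWord o r

theorem treeWord_node (o : ℕ) (l r : BinaryTree Unit) :
    treeWord o (l △ r) =
      treeWord (o + r.numNodes) l ++ (o + r.numNodes + l.numNodes) :: treeWord o r := rfl

theorem treeWord_perm_range' (o : ℕ) (t : BinaryTree Unit) :
    (treeWord o t).Perm (List.range' o t.numNodes) := by
  induction t using unitRecOn generalizing o with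
  | base => rfl
  | ind l r ihl ihr =>
    calc treeWord o (l △ r)
        |>.Perm ((o + r.numNodes + l.numNodes) :: (treeWord o r ++ treeWord (o + r.numNodes) l)) :=
          List.perm_middle.trans (List.perm_append_comm.cons _)
      _ |>.Perm ((o + r.numNodes + l.numNodes) ::
            (List.range' o r.numNodes ++ List.range' (o + r.numNodes) l.numNodes)) :=
          ((ihr o).append (ihl _)).cons _
      _ |>.Perm (List.range' o (l △ r).numNodes) := by
          rw [List.range'_append_1, Nat.add_assoc, Nat.add_comm r.numNodes, numNodes,
            List.range'_1_concat]
          exact (List.perm_append_singleton _ _).symm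

theorem length_treeWord (o : ℕ) (t : BinaryTree Unit) : (treeWord o t).length = t.numNodes := by
  simpa using (treeWord_perm_range' o t).length_eq

theorem mem_treeWord {o x : ℕ} {t : BinaryTree Unit} :
    x ∈ treeWord o t ↔ o ≤ x ∧ x < o + t.numNodes := by
  rw [(treeWord_perm_range' o t).mem_iff, List.mem_range'_1]

theorem isSkewSplit_treeWord (o : ℕ) (l r : BinaryTree Unit) :
    IsSkewSplit (treeWord (o + r.numNodes) l) (o + r.numNodes + l.numNodes) (treeWord o r) := by
  constructor <;> grind [mem_treeWord]

theorem avoids132_treeWord (o : ℕ) (t : BinaryTree Unit) : Avoids132 (treeWord o t) := by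
  induction t using unitRecOn generalizing o with
  | base => exact .nil
  | ind l r ihl ihr => exact (isSkewSplit_treeWord o l r).avoids132_iff.2 ⟨ihl _, ihr _⟩

theorem treeWord_injective (o : ℕ) : Function.Injective (treeWord o) := by
  intro t t' h
  induction t using unitRecOn generalizing o t' with
  | base => cases t' <;> simp_all [treeWord]
  | ind l r ihl ihr =>
    induction t' using unitRecOn with
    | base => simp [treeWord] at h
    | ind l' r' =>
      have numNodes_eq : (l △ r).numNodes = (l' △ r').numNodes := by
        rw [← length_treeWord o, h, length_treeWord]
      have root_eq : o + r.numNodes + l.numNodes = o + r'.numNodes + l'.numNodes := by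
        simp only [numNodes] at numNodes_eq
        omega
      rw [treeWord_node, treeWord_node, ← root_eq, List.append_cons_inj_of_notMem] at h
      · obtain ⟨word_l, -, word_r⟩ := h
        obtain rfl := ihr o word_r
        rw [ihl _ word_l]
      · grind [mem_treeWord]
      · grind [mem_treeWord]

theorem perm_range'_of_append_perm_range' {o n : ℕ} {L R : List ℕ}
    (perm : (R ++ L).Perm (List.range' o n)) (lt : ∀ c ∈ R, ∀ a ∈ L, c < a) :
    R.Perm (List.range' o R.length) ∧ L.Perm (List.range' (o + R.length) L.length) := by
  have sorted : (R.mergeSort ++ L.mergeSort).Pairwise (· ≤ ·) :=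
    List.pairwise_append.2 ⟨List.pairwise_mergeSort' _ R, List.pairwise_mergeSort' _ L,
      fun c hc a ha => (lt c (List.mem_mergeSort.1 hc) a (List.mem_mergeSort.1 ha)).le⟩
  have n_eq : n = R.length + L.length := by simpa using perm.length_eq.symm
  have append_eq : R.mergeSort ++ L.mergeSort =
      List.range' o R.length ++ List.range' (o + R.length) L.length := by
    rw [List.range'_append_1, ← n_eq]
    exact (((List.mergeSort_perm R _).append (List.mergeSort_perm L _)).trans perm).eq_of_pairwise'
      sorted List.pairwise_le_range'
  obtain ⟨sort_R, sort_L⟩ := List.append_inj append_eq (by simp)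
  exact ⟨sort_R ▸ (List.mergeSort_perm R _).symm, sort_L ▸ (List.mergeSort_perm L _).symm⟩

theorem IsSkewSplit.perm_range' {o n m : ℕ} {L R : List ℕ} (h : IsSkewSplit L m R)
    (perm : (L ++ m :: R).Perm (List.range' o n)) :
    L.Perm (List.range' (o + R.length) L.length) ∧ m = o + R.length + L.length ∧
      R.Perm (List.range' o R.length) := by
  have perm_blocks : (R ++ (L ++ [m])).Perm (List.range' o n) :=
    List.perm_append_comm.trans (by simpa using perm)
  obtain ⟨perm_R, perm_Lm⟩ := perm_range'_of_append_perm_range' perm_blocks (by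
    simpa [or_imp, forall_and] using ⟨fun c hc a ha => h.right_lt_left a ha c hc, h.right_lt⟩)
  obtain ⟨perm_L, perm_m⟩ := perm_range'_of_append_perm_range' perm_Lm (by simpa using h.left_lt)
  exact ⟨perm_L, by simpa using perm_m, perm_R⟩

theorem exists_treeWord_eq {o : ℕ} {w : List ℕ} (perm : w.Perm (List.range' o w.length))
    (avoids : Avoids132 w) : ∃ t, treeWord o t = w := by
  induction length_eq : w.length using Nat.strong_induction_on generalizing o w with
  | _ n ih =>
  subst length_eq
  rcases eq_or_ne w [] with rfl | ne_nil
  · exact ⟨.nil, rfl⟩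
  have nodup : w.Nodup := perm.nodup_iff.2 List.nodup_range'
  obtain ⟨L, m, R, rfl, split⟩ := avoids.exists_isSkewSplit nodup ne_nil
  obtain ⟨avoids_L, avoids_R⟩ := split.avoids132_iff.1 avoids
  obtain ⟨perm_L, m_eq, perm_R⟩ := split.perm_range' perm
  obtain ⟨l, hl⟩ := ih L.length (by simp) perm_L avoids_L rfl
  obtain ⟨r, hr⟩ := ih R.length (by simp; omega) perm_R avoids_R rfl
  refine ⟨l △ r, ?_⟩
  have numNodes_l : l.numNodes = L.length := by rw [← hl, length_treeWord]
  have numNodes_r : r.numNodes = R.length := by rw [← hr, length_treeWord]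
  rw [treeWord_node, numNodes_l, numNodes_r, hl, hr, m_eq]

theorem image_treeWord_numNodes_eq (o n : ℕ) :
    treeWord o '' {t | t.numNodes = n} = {w | w.Perm (List.range' o n) ∧ Avoids132 w} := by
  ext w
  constructor
  · rintro ⟨t, rfl, rfl⟩
    exact ⟨treeWord_perm_range' o t, avoids132_treeWord o t⟩
  · rintro ⟨perm, avoids⟩
    obtain rfl : w.length = n := by simpa using perm.length_eq
    obtain ⟨t, rfl⟩ := exists_treeWord_eq perm avoids
    exact ⟨t, (length_treeWord o t).symm, rfl⟩

theorem card_increasingSublists_treeWord (k o : ℕ) (t : BinaryTree Unit) :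
    (increasingSublists k (treeWord o t)).card = leftChainCount k t := by
  induction t using unitRecOn generalizing k o with
  | base => cases k <;> simp [treeWord, card_increasingSublists_zero, increasingSublists_succ_nil]
  | ind l r ihl ihr =>
    cases k with
    | zero => rw [card_increasingSublists_zero, leftChainCount_zero]
    | succ k =>
      rw [treeWord_node, (isSkewSplit_treeWord o l r).card_increasingSublists_succ, ihl, ihl, ihr,
        leftChainCount_succ_node]

end TreeWords

section Permutations

variable {k n : ℕ}

/-- The one-line notation of a permutation, zero-indexed. -/
def permWord (π : Equiv.Perm (Fin n)) : List ℕ :=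
  List.ofFn fun i => (π i : ℕ)

theorem permWord_injective : Function.Injective (permWord (n := n)) := fun π σ h => by
  ext i
  exact congrFun (List.ofFn_injective h) i

theorem range_permWord :
    Set.range (permWord (n := n)) = {w | w.Perm (List.range' 0 n)} := by
  ext w
  constructor
  · rintro ⟨π, rfl⟩
    have map_eq : permWord π = ((List.finRange n).map π).map Fin.val := by
      rw [permWord, List.ofFn_eq_map, List.map_map]
      rfl
    have range_eq : List.range' 0 n = (List.finRange n).map Fin.val := by
      simp [List.range_eq_range']
    rw [Set.mem_ofPred, map_eq, range_eq]
    exact (Equiv.Perm.map_finRange_perm π).map _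
  · intro perm
    obtain rfl : w.length = n := by simpa using perm.length_eq
    have lt_length (i : Fin w.length) : w.get i < w.length := by
      simpa using perm.mem_iff.1 (w.get_mem i)
    have nodup : w.Nodup := perm.nodup_iff.2 List.nodup_range'
    have injective : Function.Injective fun i => (⟨w.get i, lt_length i⟩ : Fin w.length) :=
      fun i j hij => List.nodup_iff_injective_get.1 nodup (congrArg Fin.val hij)
    refine ⟨.ofBijective _ (Finite.injective_iff_bijective.1 injective), ?_⟩
    simp [permWord]

theorem contains_p132_iff_s15 {π : Equiv.Perm (Fin n)} :
    Contains p132 π ↔ ∃ a b c, a < b ∧ b < c ∧ π a < π c ∧ π c < π b := by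
  constructor
  · rintro ⟨f, hf, hπ⟩
    exact ⟨f 0, f 1, f 2, hf (by decide), hf (by decide),
      (hπ 0 2).1 (by simp [p132]), (hπ 2 1).1 (by simp [p132])⟩
  · rintro ⟨a, b, c, hab, hbc, hac, hcb⟩
    refine ⟨![a, b, c], by simp [hab, hbc], fun i j => ?_⟩
    fin_cases i <;> fin_cases j <;> simp [p132] <;> omega

theorem not_contains_p132_iff {π : Equiv.Perm (Fin n)} :
    ¬ Contains p132 π ↔ Avoids132 (permWord π) := by
  rw [contains_p132_iff_s15, Avoids132, List.triplewise_iff_getElem]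
  simp only [permWord, List.getElem_ofFn, List.length_ofFn, Fin.val_fin_lt]
  constructor
  · intro h a b c hab hbc hc hπ
    exact h ⟨⟨a, by omega⟩, ⟨b, by omega⟩, ⟨c, hc⟩, hab, hbc, hπ⟩
  · rintro h ⟨a, b, c, hab, hbc, hπ⟩
    exact h a b c hab hbc c.isLt hπ

theorem ofFn_sublist_ofFn_iff {α : Type*} {g : Fin k → α} {h : Fin n → α} :
    (List.ofFn g).Sublist (List.ofFn h) ↔ ∃ f : Fin k → Fin n, StrictMono f ∧ g = h ∘ f := by
  rw [List.sublist_iff_exists_fin_orderEmbedding_get_eq]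
  constructor
  · rintro ⟨f, hf⟩
    refine ⟨Fin.cast List.length_ofFn ∘ f ∘ Fin.cast List.length_ofFn.symm, ?_, ?_⟩
    · exact (Fin.cast_strictMono _).comp (f.strictMono.comp (Fin.cast_strictMono _))
    · funext i
      simpa only [List.get_ofFn, Fin.cast_cast, Fin.cast_eq_self, Function.comp_apply] using
        hf (i.cast List.length_ofFn.symm)
  · rintro ⟨f, hf, rfl⟩
    refine ⟨.ofStrictMono (Fin.cast List.length_ofFn.symm ∘ f ∘ Fin.cast List.length_ofFn) ?_, ?_⟩
    · exact (Fin.cast_strictMono _).comp (hf.comp (Fin.cast_strictMono _))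
    · intro i
      simp only [List.get_ofFn]
      rfl

theorem containsOnce_iff_ncard (τ : Equiv.Perm (Fin k)) (π : Equiv.Perm (Fin n)) :
    ContainsOnce τ π ↔ {f | IsOccurrence τ π f}.ncard = 1 := by
  rw [Set.ncard_eq_one]
  simp only [ContainsOnce, ExistsUnique, Set.eq_singleton_iff_unique_mem, Set.mem_ofPred]

theorem isOccurrence_one_iff {π : Equiv.Perm (Fin n)} {f : Fin k → Fin n} :
    IsOccurrence (1 : Equiv.Perm (Fin k)) π f ↔ StrictMono f ∧ StrictMono (π ∘ f) :=
  and_congr_right fun _ =>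
    ⟨fun h _ _ hab => (h _ _).1 hab, fun h _ _ => h.lt_iff_lt.symm⟩

theorem coe_increasingSublists_permWord (π : Equiv.Perm (Fin n)) :
    (increasingSublists k (permWord π) : Set (List ℕ)) =
      (fun f : Fin k → Fin n => List.ofFn fun i => (π (f i) : ℕ)) ''
        {f | IsOccurrence (1 : Equiv.Perm (Fin k)) π f} := by
  ext s
  simp only [Finset.mem_coe, mem_increasingSublists, Set.mem_image, Set.mem_ofPred,
    isOccurrence_one_iff]
  constructor
  · rintro ⟨sublist, rfl, increasing⟩
    obtain ⟨f, hf, hs⟩ := ofFn_sublist_ofFn_iff.1 ((List.ofFn_get s).symm ▸ sublist)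
    refine ⟨f, ⟨hf, fun a b hab => ?_⟩, ?_⟩
    · have get_lt := increasing.sortedLT.strictMono_get hab
      rwa [hs] at get_lt
    · exact (congrArg List.ofFn hs).symm.trans (List.ofFn_get s)
  · rintro ⟨f, ⟨hf, hπf⟩, rfl⟩
    exact ⟨ofFn_sublist_ofFn_iff.2 ⟨f, hf, rfl⟩, List.length_ofFn,
      (List.sortedLT_ofFn_iff.2 (Fin.val_strictMono.comp hπf)).pairwise⟩

theorem containsOnce_one_iff {π : Equiv.Perm (Fin n)} :
    ContainsOnce (1 : Equiv.Perm (Fin k)) π ↔ (increasingSublists k (permWord π)).card = 1 := by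
  have injective : Function.Injective fun f : Fin k → Fin n => List.ofFn fun i => (π (f i) : ℕ) :=
    fun f g h => funext fun i => π.injective (Fin.ext (congrFun (List.ofFn_injective h) i))
  rw [containsOnce_iff_ncard, ← Set.ncard_coe_finset, coe_increasingSublists_permWord,
    Set.ncard_image_of_injective _ injective]

theorem card_avoids132_permWord_eq_card_trees (n : ℕ) (P : List ℕ → Prop) [DecidablePred P] :
    Nat.card {π : Equiv.Perm (Fin n) // Avoids132 (permWord π) ∧ P (permWord π)} =
      ((BinaryTree.treesOfNumNodesEq n).filter fun t => P (treeWord 0 t)).card := by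
  have image_perms : permWord '' {π : Equiv.Perm (Fin n) | Avoids132 (permWord π) ∧
      P (permWord π)} = {w | w.Perm (List.range' 0 n) ∧ Avoids132 w} ∩ {w | P w} := by
    have image_preimage :=
      Set.image_preimage_eq_range_inter (f := permWord (n := n)) (t := {w | Avoids132 w ∧ P w})
    rw [range_permWord] at image_preimage
    refine image_preimage.trans ?_
    ext w
    exact and_assoc.symm
  have image_trees : treeWord 0 '' {t | t.numNodes = n ∧ P (treeWord 0 t)} =
      {w | w.Perm (List.range' 0 n) ∧ Avoids132 w} ∩ {w | P w} := by
    rw [← image_treeWord_numNodes_eq, ← Set.image_inter_preimage]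
    rfl
  calc Nat.card {π : Equiv.Perm (Fin n) // Avoids132 (permWord π) ∧ P (permWord π)}
      = (permWord '' {π : Equiv.Perm (Fin n) |
          Avoids132 (permWord π) ∧ P (permWord π)}).ncard :=
        (Set.ncard_image_of_injective _ permWord_injective).symm
    _ = (treeWord 0 '' {t | t.numNodes = n ∧ P (treeWord 0 t)}).ncard := by
        rw [image_perms, image_trees]
    _ = ((BinaryTree.treesOfNumNodesEq n).filter fun t => P (treeWord 0 t)).card := by
        rw [Set.ncard_image_of_injective _ (treeWord_injective 0), ← Set.ncard_coe_finset]
        simp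

theorem card_avoids132_containsOnce (k n : ℕ) :
    Nat.card {π : Equiv.Perm (Fin n) //
        ¬ Contains p132 π ∧ ContainsOnce (1 : Equiv.Perm (Fin k)) π} =
      ((BinaryTree.treesOfNumNodesEq n).filter fun t => leftChainCount k t = 1).card := by
  simp only [not_contains_p132_iff, containsOnce_one_iff]
  rw [card_avoids132_permWord_eq_card_trees n fun w => (increasingSublists k w).card = 1]
  simp only [card_increasingSublists_treeWord]

end Permutations

/-- For `k ≥ 1`, the generating function `G` for `132`-avoiding
permutations containing the increasing pattern `12⋯k` (the identity of `S_k`) exactly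
once satisfies `G·p_k² = X^k` (here `pU (m+1) = p_m`). -/
theorem stmt15 (k : ℕ) (hk : 1 ≤ k) :
    (PowerSeries.mk fun n => ((Nat.card {π : Equiv.Perm (Fin n) //
        ¬ Contains p132 π ∧ ContainsOnce (1 : Equiv.Perm (Fin k)) π} : ℕ) : ℚ))
      * (pU (k + 1) : PowerSeries ℚ) ^ 2 = PowerSeries.X ^ k := by
  obtain ⟨k, rfl⟩ := Nat.exists_eq_add_of_le' hk
  rw [← leftChainSeries_one_mul_pU_sq k]
  congr 1
  ext n
  rw [PowerSeries.coeff_mk, card_avoids132_containsOnce, coeff_leftChainSeries]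
end
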